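/- Let L be a complete orthomodular lattice and M a nonempty subset of L. Then the commutant M^C contains 0 and 1, is closed under the orthocomplement (b ∈ M^C implies b⊥ ∈ M^C), and is closed under arbitrary suprema and infima: for every family (b_k)_{k ∈ K} in M^C, both ⋁_k b_k and ⋀_k b_k belong to M^C. In particular, M^C is a complete sublattice of L. -/

import Mathlib

/-- In an orthocomplemented lattice, `a` commutes with `b` if `a = (a ⊓ b) ⊔ (a ⊓ bᗮ)`. -/
def OCommutes {L : Type*} [Lattice L] (oc : L → L) (a b : L) : Prop :=
  a = (a ⊓ b) ⊔ (a ⊓ oc b)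

/-- The commutant of a subset `M` of an orthocomplemented lattice. -/
def OCommutant {L : Type*} [Lattice L] (oc : L → L) (M : Set L) : Set L :=
  {b | ∀ a ∈ M, OCommutes oc a b}

/-! By the orthomodular law, `a` commutes with `b` if and only if `b ≤ a⊥ ⊔ (a ⊓ b)`. The
right-hand side is monotone in `b`, so this inequality passes to any supremum of elements that
satisfy it. Commuting with `b` and commuting with `b⊥` are the same, and the orthocomplement
exchanges infima and suprema, which gives closure under infima. -/

open Function OrderDual

theorem le_map_of_isLUB {α : Type*} [Preorder α] {φ : α → α} (hφ : Monotone φ) {S : Set α} {s : α}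
    (hS : ∀ b ∈ S, b ≤ φ b) (hs : IsLUB S s) : s ≤ φ s :=
  hs.2 fun b hb => (hS b hb).trans (hφ (hs.1 hb))

section AntitoneInvolution

/-- An antitone involution, viewed as an isomorphism onto the order dual, so that its De Morgan
laws are instances of the preservation of suprema and infima by order isomorphisms. -/
def dualOrderIso {α : Type*} [Preorder α] {oc : α → α} (h_anti : Antitone oc)
    (h_inv : Involutive oc) : α ≃o αᵒᵈ :=
  (h_inv.toPerm.trans toDual).toOrderIso h_anti.dual_right h_anti.dual_left

theorem isLUB_image_of_isGLB {α : Type*} [Preorder α] {oc : α → α} (h_anti : Antitone oc)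
    (h_inv : Involutive oc) {S : Set α} {s : α} (hs : IsGLB S s) : IsLUB (oc '' S) (oc s) :=
  (dualOrderIso h_anti h_inv).isGLB_image'.2 hs

variable {L : Type*} [Lattice L] {oc : L → L}

theorem map_sup_of_antitone_of_involutive (h_anti : Antitone oc) (h_inv : Involutive oc) (a b : L) :
    oc (a ⊔ b) = oc a ⊓ oc b :=
  (dualOrderIso h_anti h_inv).map_sup a b

theorem map_inf_of_antitone_of_involutive (h_anti : Antitone oc) (h_inv : Involutive oc) (a b : L) :
    oc (a ⊓ b) = oc a ⊔ oc b :=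
  (dualOrderIso h_anti h_inv).map_inf a b

end AntitoneInvolution

section Commutation

variable {L : Type*} [Lattice L] {oc : L → L}

theorem OCommutes.compl_right (h_inv : Involutive oc) {a b : L} (h : OCommutes oc a b) :
    OCommutes oc a (oc b) := by
  unfold OCommutes at h ⊢
  rwa [h_inv b, sup_comm]

theorem compl_mem_oCommutant (h_inv : Involutive oc) {M : Set L} {b : L}
    (hb : b ∈ OCommutant oc M) : oc b ∈ OCommutant oc M :=
  fun a ha => (hb a ha).compl_right h_inv

/-- The Sasaki hook `a⊥ ⊔ (a ⊓ b)`, the implication of quantum logic, used to express commutation as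
a single inequality. -/
def sasakiHook (oc : L → L) (a b : L) : L :=
  oc a ⊔ (a ⊓ b)

theorem sasakiHook_mono_right (oc : L → L) (a : L) : Monotone (sasakiHook oc a) :=
  fun _ _ h => sup_le_sup_left (inf_le_inf_left a h) (oc a)

variable (h_anti : Antitone oc) (h_inv : Involutive oc)
  (h_orthomodular : ∀ a b : L, b ≤ a → b = a ⊓ (oc a ⊔ b))

include h_anti h_inv h_orthomodular

theorem sup_compl_inf_eq_of_le {a b : L} (h : b ≤ a) : b ⊔ (oc b ⊓ a) = a := by
  have h_dual : oc a = oc b ⊓ (oc (oc b) ⊔ oc a) := h_orthomodular (oc b) (oc a) (h_anti h)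
  rw [← map_inf_of_antitone_of_involutive h_anti h_inv,
    ← map_sup_of_antitone_of_involutive h_anti h_inv] at h_dual
  exact (h_inv.injective h_dual).symm

theorem OCommutes.le_sasakiHook {a b : L} (h : OCommutes oc a b) : b ≤ sasakiHook oc a b := by
  have compl_eq : oc a = oc (a ⊓ b) ⊓ (oc a ⊔ b) := by
    have h_oc := congrArg oc h
    rwa [map_sup_of_antitone_of_involutive h_anti h_inv,
      map_inf_of_antitone_of_involutive h_anti h_inv a (oc b), h_inv b] at h_oc
  calc
    b ≤ oc a ⊔ b := le_sup_right
    _ = (a ⊓ b) ⊔ (oc (a ⊓ b) ⊓ (oc a ⊔ b)) :=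
      (sup_compl_inf_eq_of_le h_anti h_inv h_orthomodular (inf_le_right.trans le_sup_right)).symm
    _ = (a ⊓ b) ⊔ oc a := by rw [← compl_eq]
    _ = sasakiHook oc a b := sup_comm _ _

theorem oCommutes_of_le_sasakiHook {a b : L} (h : b ≤ sasakiHook oc a b) :
    OCommutes oc a b := by
  have inf_compl_le : a ⊓ oc (a ⊓ b) ≤ oc b := by
    have h_oc : oc (oc a ⊔ (a ⊓ b)) ≤ oc b := h_anti h
    rwa [map_sup_of_antitone_of_involutive h_anti h_inv, h_inv a] at h_oc
  refine le_antisymm ?_ (sup_le inf_le_left inf_le_left)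
  calc
    a = (a ⊓ b) ⊔ (oc (a ⊓ b) ⊓ a) :=
      (sup_compl_inf_eq_of_le h_anti h_inv h_orthomodular inf_le_left).symm
    _ = (a ⊓ b) ⊔ (a ⊓ oc (a ⊓ b)) := by rw [inf_comm (oc (a ⊓ b))]
    _ ≤ (a ⊓ b) ⊔ (a ⊓ oc b) := sup_le_sup_left (le_inf inf_le_left inf_compl_le) _

theorem oCommutes_iff_le_sasakiHook {a b : L} : OCommutes oc a b ↔ b ≤ sasakiHook oc a b :=
  ⟨OCommutes.le_sasakiHook h_anti h_inv h_orthomodular,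
    oCommutes_of_le_sasakiHook h_anti h_inv h_orthomodular⟩

theorem isLUB_mem_oCommutant {M S : Set L} {s : L} (hS : S ⊆ OCommutant oc M)
    (hs : IsLUB S s) : s ∈ OCommutant oc M := by
  intro a ha
  have commutes_iff {b : L} : OCommutes oc a b ↔ b ≤ sasakiHook oc a b :=
    oCommutes_iff_le_sasakiHook h_anti h_inv h_orthomodular
  exact commutes_iff.2 <| le_map_of_isLUB (sasakiHook_mono_right oc a)
    (fun b hb => commutes_iff.1 (hS hb a ha)) hs

theorem isGLB_mem_oCommutant {M S : Set L} {s : L} (hS : S ⊆ OCommutant oc M)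
    (hs : IsGLB S s) : s ∈ OCommutant oc M := by
  have image_subset : oc '' S ⊆ OCommutant oc M :=
    Set.image_subset_iff.2 fun _ hb => compl_mem_oCommutant h_inv (hS hb)
  have compl_mem : oc s ∈ OCommutant oc M :=
    isLUB_mem_oCommutant h_anti h_inv h_orthomodular image_subset
      (isLUB_image_of_isGLB h_anti h_inv hs)
  simpa only [h_inv s] using compl_mem_oCommutant h_inv compl_mem

end Commutation

theorem oCommutant_complete_sublattice_general {L : Type*} [Lattice L] [BoundedOrder L]
    {oc : L → L} (h_anti : Antitone oc) (h_inv : Involutive oc)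
    (h_orthomodular : ∀ a b : L, b ≤ a → b = a ⊓ (oc a ⊔ b)) (M : Set L) :
    ⊥ ∈ OCommutant oc M ∧ ⊤ ∈ OCommutant oc M ∧
    (∀ b ∈ OCommutant oc M, oc b ∈ OCommutant oc M) ∧
    (∀ S ⊆ OCommutant oc M, ∀ s,
      (IsLUB S s → s ∈ OCommutant oc M) ∧ (IsGLB S s → s ∈ OCommutant oc M)) :=
  ⟨isLUB_mem_oCommutant h_anti h_inv h_orthomodular (Set.empty_subset _) isLUB_empty,
    isGLB_mem_oCommutant h_anti h_inv h_orthomodular (Set.empty_subset _) isGLB_empty,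
    fun _ => compl_mem_oCommutant h_inv,
    fun _ hS _ => ⟨isLUB_mem_oCommutant h_anti h_inv h_orthomodular hS,
      isGLB_mem_oCommutant h_anti h_inv h_orthomodular hS⟩⟩

/-- In a complete orthomodular lattice, the commutant of a nonempty subset contains `⊥` and `⊤`,
is closed under the orthocomplement, and is closed under arbitrary suprema and infima;
in particular it is a complete sublattice. -/
theorem oCommutant_complete_sublattice {L : Type*} [CompleteLattice L]
    (oc : L → L)
    (h_inf_compl : ∀ a : L, a ⊓ oc a = ⊥)
    (h_sup_compl : ∀ a : L, a ⊔ oc a = ⊤)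
    (h_compl_inf : ∀ a b : L, oc (a ⊓ b) = oc a ⊔ oc b)
    (h_compl_sup : ∀ a b : L, oc (a ⊔ b) = oc a ⊓ oc b)
    (h_compl_compl : ∀ a : L, oc (oc a) = a)
    (h_orthomodular : ∀ a b : L, b ≤ a → b = a ⊓ (oc a ⊔ b))
    (M : Set L) (hM : M.Nonempty) :
    ⊥ ∈ OCommutant oc M ∧ ⊤ ∈ OCommutant oc M ∧
    (∀ b ∈ OCommutant oc M, oc b ∈ OCommutant oc M) ∧
    (∀ (K : Type*) (f : K → L), (∀ k, f k ∈ OCommutant oc M) →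
      (⨆ k, f k) ∈ OCommutant oc M ∧ (⨅ k, f k) ∈ OCommutant oc M) := by
  have h_anti : Antitone oc :=
    antitoneOn_univ.1 (AntitoneOn.of_map_inf fun a _ b _ => h_compl_inf a b)
  have ⟨h_bot, h_top, h_oc, h_bounds⟩ := oCommutant_complete_sublattice_general
    h_anti h_compl_compl h_orthomodular M
  exact ⟨h_bot, h_top, h_oc, fun K f hf =>
    have h := h_bounds (Set.range f) (Set.range_subset_iff.2 hf)
    ⟨(h _).1 isLUB_iSup, (h _).2 isGLB_iInf⟩⟩
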